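/- In the Monge chart, assume the origin is a normal singularity, i.e., r₁ + t₁ = 0 and r₂ + t₂ = 0. Then the coefficient A := F g_H − f_H G of dv² in the differential equation of principal mean curvature lines satisfies A(0,0) = 0, ∂A/∂u(0,0) = −[s₁(a₁ + b₁) + s₂(a₂ + b₂)]/2 and ∂A/∂v(0,0) = −[s₁(c₁ + d₁) + s₂(c₂ + d₂)]/2. -/

import Mathlib

/-!
Write `x = (0, 0)`. At a normal singularity the mean curvature vector vanishes at `x`, since there
`E = G = 1`, `F = 0`, `N₁ = e₃`, `N₂ = e₄`, so that `Hᵢ = (rᵢ + tᵢ) / 2 = 0`. Hence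
`A = F g_H - f_H G` vanishes at `x`, and as `F`, `g_H`, `f_H` vanish at `x` with `F` and `G`
stationary there, `dA = -df_H = -(s₁ dH₁ + s₂ dH₂)` at `x`.

To find `dHᵢ`, note that all first derivatives of `h₁`, `h₂` vanish at `x`, so that `E`, `F`, `G`
and the last two components of `N₁` and `N₂` depend on them only through terms of second order and
are stationary at `x` (`hasFDerivAt_N1`, `hasFDerivAt_N2`). Since `α_uu`, `α_uv`, `α_vv` have only
these last two components, the derivatives at `x` of `eᵢ`, `gᵢ` are those of `∂²hᵢ/∂u²`,
`∂²hᵢ/∂v²` (`hasFDerivAt_inner_frame`), and the quotient rule gives `dHᵢ = d(Δhᵢ) / 2`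
(`hasFDerivAt_meanCurv`). Symmetry of partial derivatives (`pdu_pdv_comm`) identifies the result
with the third-order coefficients `aᵢ`, `bᵢ`, `cᵢ`, `dᵢ`.
-/

noncomputable section

open scoped RealInnerProductSpace

abbrev E4 : Type := EuclideanSpace ℝ (Fin 4)

/-- Partial derivative with respect to the first variable `u`. -/
def pdu {X : Type*} [NormedAddCommGroup X] [NormedSpace ℝ X]
    (f : ℝ × ℝ → X) (p : ℝ × ℝ) : X := fderiv ℝ f p (1, 0)

/-- Partial derivative with respect to the second variable `v`. -/
def pdv {X : Type*} [NormedAddCommGroup X] [NormedSpace ℝ X]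
    (f : ℝ × ℝ → X) (p : ℝ × ℝ) : X := fderiv ℝ f p (0, 1)

/-- The wedge `x ∧ y ∧ z` of three vectors of `ℝ⁴`: the unique vector satisfying
`⟪x ∧ y ∧ z, w⟫ = det (x, y, z, w)` for all `w ∈ ℝ⁴`. -/
def wedge (x y z : E4) : E4 :=
  (WithLp.equiv 2 (Fin 4 → ℝ)).symm fun i =>
    Matrix.det (Matrix.of ![(x : Fin 4 → ℝ), y, z, fun j => if j = i then 1 else 0])

namespace Monge

/-- The immersion `α (u,v) = (u, v, h₁(u,v), h₂(u,v))` in the Monge chart. -/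
def α (h₁ h₂ : ℝ × ℝ → ℝ) (p : ℝ × ℝ) : E4 :=
  (WithLp.equiv 2 (Fin 4 → ℝ)).symm ![p.1, p.2, h₁ p, h₂ p]

def αu (h₁ h₂ : ℝ × ℝ → ℝ) : ℝ × ℝ → E4 := pdu (α h₁ h₂)
def αv (h₁ h₂ : ℝ × ℝ → ℝ) : ℝ × ℝ → E4 := pdv (α h₁ h₂)
def αuu (h₁ h₂ : ℝ × ℝ → ℝ) : ℝ × ℝ → E4 := pdu (αu h₁ h₂)
def αuv (h₁ h₂ : ℝ × ℝ → ℝ) : ℝ × ℝ → E4 := pdv (αu h₁ h₂)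
def αvv (h₁ h₂ : ℝ × ℝ → ℝ) : ℝ × ℝ → E4 := pdv (αv h₁ h₂)

/-- `B₁ = (−∂h₁/∂u, −∂h₁/∂v, 1, 0)`. -/
def B1 (h₁ : ℝ × ℝ → ℝ) (p : ℝ × ℝ) : E4 :=
  (WithLp.equiv 2 (Fin 4 → ℝ)).symm ![-(pdu h₁ p), -(pdv h₁ p), 1, 0]

/-- `B₂ = α_u ∧ α_v ∧ B₁`. -/
def B2 (h₁ h₂ : ℝ × ℝ → ℝ) (p : ℝ × ℝ) : E4 :=
  wedge (αu h₁ h₂ p) (αv h₁ h₂ p) (B1 h₁ p)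

/-- `N₁ = B₁/|B₁|`. -/
def N1 (h₁ : ℝ × ℝ → ℝ) (p : ℝ × ℝ) : E4 := ‖B1 h₁ p‖⁻¹ • B1 h₁ p

/-- `N₂ = B₂/|B₂|`. -/
def N2 (h₁ h₂ : ℝ × ℝ → ℝ) (p : ℝ × ℝ) : E4 := ‖B2 h₁ h₂ p‖⁻¹ • B2 h₁ h₂ p

/-- Coefficient `E` of the first fundamental form. -/
def Ec (h₁ h₂ : ℝ × ℝ → ℝ) (p : ℝ × ℝ) : ℝ := ⟪αu h₁ h₂ p, αu h₁ h₂ p⟫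
/-- Coefficient `F` of the first fundamental form. -/
def Fc (h₁ h₂ : ℝ × ℝ → ℝ) (p : ℝ × ℝ) : ℝ := ⟪αu h₁ h₂ p, αv h₁ h₂ p⟫
/-- Coefficient `G` of the first fundamental form. -/
def Gc (h₁ h₂ : ℝ × ℝ → ℝ) (p : ℝ × ℝ) : ℝ := ⟪αv h₁ h₂ p, αv h₁ h₂ p⟫

def e1 (h₁ h₂ : ℝ × ℝ → ℝ) (p : ℝ × ℝ) : ℝ := ⟪αuu h₁ h₂ p, N1 h₁ p⟫
def f1 (h₁ h₂ : ℝ × ℝ → ℝ) (p : ℝ × ℝ) : ℝ := ⟪αuv h₁ h₂ p, N1 h₁ p⟫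
def g1 (h₁ h₂ : ℝ × ℝ → ℝ) (p : ℝ × ℝ) : ℝ := ⟪αvv h₁ h₂ p, N1 h₁ p⟫
def e2 (h₁ h₂ : ℝ × ℝ → ℝ) (p : ℝ × ℝ) : ℝ := ⟪αuu h₁ h₂ p, N2 h₁ h₂ p⟫
def f2 (h₁ h₂ : ℝ × ℝ → ℝ) (p : ℝ × ℝ) : ℝ := ⟪αuv h₁ h₂ p, N2 h₁ h₂ p⟫
def g2 (h₁ h₂ : ℝ × ℝ → ℝ) (p : ℝ × ℝ) : ℝ := ⟪αvv h₁ h₂ p, N2 h₁ h₂ p⟫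

/-- First component `H₁ = (G e₁ − 2F f₁ + E g₁)/(2(EG − F²))` of the mean curvature vector. -/
def Hc1 (h₁ h₂ : ℝ × ℝ → ℝ) (p : ℝ × ℝ) : ℝ :=
  (Gc h₁ h₂ p * e1 h₁ h₂ p - 2 * Fc h₁ h₂ p * f1 h₁ h₂ p + Ec h₁ h₂ p * g1 h₁ h₂ p) /
    (2 * (Ec h₁ h₂ p * Gc h₁ h₂ p - Fc h₁ h₂ p ^ 2))

/-- Second component `H₂ = (G e₂ − 2F f₂ + E g₂)/(2(EG − F²))` of the mean curvature vector. -/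
def Hc2 (h₁ h₂ : ℝ × ℝ → ℝ) (p : ℝ × ℝ) : ℝ :=
  (Gc h₁ h₂ p * e2 h₁ h₂ p - 2 * Fc h₁ h₂ p * f2 h₁ h₂ p + Ec h₁ h₂ p * g2 h₁ h₂ p) /
    (2 * (Ec h₁ h₂ p * Gc h₁ h₂ p - Fc h₁ h₂ p ^ 2))

/-- The mean curvature vector `H = H₁N₁ + H₂N₂`. -/
def Hvec (h₁ h₂ : ℝ × ℝ → ℝ) (p : ℝ × ℝ) : E4 :=
  Hc1 h₁ h₂ p • N1 h₁ p + Hc2 h₁ h₂ p • N2 h₁ h₂ p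

def eH (h₁ h₂ : ℝ × ℝ → ℝ) (p : ℝ × ℝ) : ℝ := ⟪αuu h₁ h₂ p, Hvec h₁ h₂ p⟫
def fH (h₁ h₂ : ℝ × ℝ → ℝ) (p : ℝ × ℝ) : ℝ := ⟪αuv h₁ h₂ p, Hvec h₁ h₂ p⟫
def gH (h₁ h₂ : ℝ × ℝ → ℝ) (p : ℝ × ℝ) : ℝ := ⟪αvv h₁ h₂ p, Hvec h₁ h₂ p⟫

end Monge

/-- `r = ∂²h/∂u²(0,0)`. -/
def rr (h : ℝ × ℝ → ℝ) : ℝ := pdu (pdu h) (0, 0)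
/-- `s = ∂²h/∂u∂v(0,0)`. -/
def ss (h : ℝ × ℝ → ℝ) : ℝ := pdv (pdu h) (0, 0)
/-- `t = ∂²h/∂v²(0,0)`. -/
def tt (h : ℝ × ℝ → ℝ) : ℝ := pdv (pdv h) (0, 0)
/-- `a = ∂³h/∂u³(0,0)`. -/
def aa (h : ℝ × ℝ → ℝ) : ℝ := pdu (pdu (pdu h)) (0, 0)
/-- `d = ∂³h/∂u²∂v(0,0)`. -/
def dd (h : ℝ × ℝ → ℝ) : ℝ := pdv (pdu (pdu h)) (0, 0)
/-- `b = ∂³h/∂u∂v²(0,0)`. -/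
def bb (h : ℝ × ℝ → ℝ) : ℝ := pdv (pdv (pdu h)) (0, 0)
/-- `c = ∂³h/∂v³(0,0)`. -/
def cc (h : ℝ × ℝ → ℝ) : ℝ := pdv (pdv (pdv h)) (0, 0)

open Monge

/-! ### Vectors of `ℝ⁴` in coordinates -/

/-- The vector of `ℝ⁴` with the given coordinates. -/
def mk4 (a b c d : ℝ) : E4 := (WithLp.equiv 2 (Fin 4 → ℝ)).symm ![a, b, c, d]

lemma inner_mk4 (a b c d a' b' c' d' : ℝ) :
    ⟪mk4 a b c d, mk4 a' b' c' d'⟫ = a * a' + b * b' + c * c' + d * d' := by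
  simp [mk4, PiLp.inner_apply, Fin.sum_univ_four, mul_comm]

lemma norm_mk4 (a b c d : ℝ) : ‖mk4 a b c d‖ = √(a * a + b * b + c * c + d * d) := by
  rw [← inner_mk4, real_inner_self_eq_norm_sq, Real.sqrt_sq (norm_nonneg _)]

lemma smul_mk4 (k a b c d : ℝ) : k • mk4 a b c d = mk4 (k * a) (k * b) (k * c) (k * d) := by
  ext i; fin_cases i <;> simp [mk4]

/-- The coordinates of `B₂`, with `pᵢ`, `qᵢ` standing for the partial derivatives of `hᵢ`. -/
lemma wedge_mk4 (p₁ p₂ q₁ q₂ : ℝ) :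
    wedge (mk4 1 0 p₁ p₂) (mk4 0 1 q₁ q₂) (mk4 (-p₁) (-q₁) 1 0) =
      mk4 (p₁ * q₁ * q₂ - p₂ * (1 + q₁ * q₁)) (p₁ * q₁ * p₂ - q₂ * (1 + p₁ * p₁))
        (-(p₁ * p₂ + q₁ * q₂)) (1 + p₁ * p₁ + q₁ * q₁) := by
  ext i
  fin_cases i <;>
    simp [mk4, wedge, Matrix.det_succ_row_zero, Fin.sum_univ_succ, Fin.succAbove] <;> ring

/-! ### Partial derivatives and stationary functions -/

section Calculus

variable {x : ℝ × ℝ}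

lemma fderiv_mk4 {f₀ f₁ f₂ f₃ : ℝ × ℝ → ℝ} (d₀ : DifferentiableAt ℝ f₀ x)
    (d₁ : DifferentiableAt ℝ f₁ x) (d₂ : DifferentiableAt ℝ f₂ x)
    (d₃ : DifferentiableAt ℝ f₃ x) (w : ℝ × ℝ) :
    fderiv ℝ (fun p => mk4 (f₀ p) (f₁ p) (f₂ p) (f₃ p)) x w =
      mk4 (fderiv ℝ f₀ x w) (fderiv ℝ f₁ x w) (fderiv ℝ f₂ x w) (fderiv ℝ f₃ x w) := by
  have hd : DifferentiableAt ℝ (fun p => mk4 (f₀ p) (f₁ p) (f₂ p) (f₃ p)) x := by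
    rw [differentiableAt_euclidean]
    intro i; fin_cases i <;> simpa [mk4]
  have key := hasFDerivWithinAt_euclidean.1 (hd.hasFDerivAt.hasFDerivWithinAt (s := Set.univ))
  ext i
  have hi := congrArg (fun L : ℝ × ℝ →L[ℝ] ℝ => L w) (hasFDerivWithinAt_univ.1 (key i)).fderiv
  fin_cases i <;> simpa [mk4] using hi.symm

lemma contDiff_pdu {h : ℝ × ℝ → ℝ} (hs : ContDiff ℝ (⊤ : ℕ∞) h) :
    ContDiff ℝ (⊤ : ℕ∞) (pdu h) :=
  (hs.fderiv_right (m := (⊤ : ℕ∞)) (by simp)).clm_apply contDiff_const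

lemma contDiff_pdv {h : ℝ × ℝ → ℝ} (hs : ContDiff ℝ (⊤ : ℕ∞) h) :
    ContDiff ℝ (⊤ : ℕ∞) (pdv h) :=
  (hs.fderiv_right (m := (⊤ : ℕ∞)) (by simp)).clm_apply contDiff_const

lemma pdu_pdv_comm {h : ℝ × ℝ → ℝ} (hs : ContDiff ℝ (⊤ : ℕ∞) h) :
    pdu (pdv h) = pdv (pdu h) := by
  funext p
  have hd : DifferentiableAt ℝ (fderiv ℝ h) p :=
    (hs.fderiv_right (m := (⊤ : ℕ∞)) (by simp)).differentiable (by simp) p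
  have hsymm : IsSymmSndFDerivAt ℝ h p :=
    hs.contDiffAt.isSymmSndFDerivAt (by
      rw [minSmoothness_of_isRCLikeNormedField]
      exact WithTop.coe_le_coe.2 (le_top : (2 : ℕ∞) ≤ ⊤))
  have h1 : ∀ w z : ℝ × ℝ, fderiv ℝ (fun q => fderiv ℝ h q w) p z =
      fderiv ℝ (fderiv ℝ h) p z w := by
    intro w z
    rw [fderiv_clm_apply hd (differentiableAt_const w)]
    simp
  change fderiv ℝ (fun q => fderiv ℝ h q (0, 1)) p (1, 0) =
    fderiv ℝ (fun q => fderiv ℝ h q (1, 0)) p (0, 1)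
  rw [h1, h1]
  exact hsymm _ _

/-- A product of two functions vanishing at `x` is stationary at `x`. -/
lemma hasFDerivAt_mul_zero {f g : ℝ × ℝ → ℝ} (hf : DifferentiableAt ℝ f x)
    (hg : DifferentiableAt ℝ g x) (f0 : f x = 0) (g0 : g x = 0) :
    HasFDerivAt (fun p => f p * g p) (0 : ℝ × ℝ →L[ℝ] ℝ) x := by
  simpa [f0, g0] using hf.hasFDerivAt.fun_mul hg.hasFDerivAt

/-- A product of two functions stationary at `x` is stationary at `x`. -/
lemma hasFDerivAt_mul_stat {f g : ℝ × ℝ → ℝ} (hf : HasFDerivAt f (0 : ℝ × ℝ →L[ℝ] ℝ) x)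
    (hg : HasFDerivAt g (0 : ℝ × ℝ →L[ℝ] ℝ) x) :
    HasFDerivAt (fun p => f p * g p) (0 : ℝ × ℝ →L[ℝ] ℝ) x := by
  simpa using hf.fun_mul hg

/-- The function `S ^ (-1/2)` is stationary where `S` is stationary with value `1`. -/
lemma hasFDerivAt_inv_sqrt {S : ℝ × ℝ → ℝ} (hS : HasFDerivAt S (0 : ℝ × ℝ →L[ℝ] ℝ) x)
    (S1 : S x = 1) :
    HasFDerivAt (fun p => (√(S p))⁻¹) (0 : ℝ × ℝ →L[ℝ] ℝ) x := by
  have h1 : HasFDerivAt (fun p => √(S p)) (0 : ℝ × ℝ →L[ℝ] ℝ) x := by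
    simpa using hS.sqrt (by rw [S1]; norm_num)
  exact ((hasDerivAt_inv (x := √(S x)) (by simp [S1])).comp_hasFDerivAt x h1).congr_fderiv (by simp)

/-- The derivative of `⟨(0, 0, X₁, X₂), N⟩ = X₁ m₁ + X₂ m₂` when the last two components
`m₁`, `m₂` of `N` are stationary at `x`. -/
lemma hasFDerivAt_inner_frame {X₁ X₂ m₁ m₂ : ℝ × ℝ → ℝ} (hX₁ : DifferentiableAt ℝ X₁ x)
    (hX₂ : DifferentiableAt ℝ X₂ x) (hm₁ : HasFDerivAt m₁ (0 : ℝ × ℝ →L[ℝ] ℝ) x)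
    (hm₂ : HasFDerivAt m₂ (0 : ℝ × ℝ →L[ℝ] ℝ) x) :
    HasFDerivAt (fun p => X₁ p * m₁ p + X₂ p * m₂ p)
      (m₁ x • fderiv ℝ X₁ x + m₂ x • fderiv ℝ X₂ x) x := by
  simpa using (hX₁.hasFDerivAt.fun_mul hm₁).fun_add (hX₂.hasFDerivAt.fun_mul hm₂)

/-- If the first fundamental form is Euclidean to first order at `x` and the mean curvature
`(G e - 2 F f + E g) / (2 (E G - F²))` vanishes there, its derivative at `x` is that of
`(e + g) / 2`. -/
lemma hasFDerivAt_meanCurv {E F G e f g : ℝ × ℝ → ℝ} {e' f' g' : ℝ × ℝ →L[ℝ] ℝ}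
    (hE : HasFDerivAt E (0 : ℝ × ℝ →L[ℝ] ℝ) x)
    (hF : HasFDerivAt F (0 : ℝ × ℝ →L[ℝ] ℝ) x)
    (hG : HasFDerivAt G (0 : ℝ × ℝ →L[ℝ] ℝ) x)
    (he : HasFDerivAt e e' x) (hf : HasFDerivAt f f' x) (hg : HasFDerivAt g g' x)
    (E1 : E x = 1) (F0 : F x = 0) (G1 : G x = 1) (h0 : e x + g x = 0) :
    HasFDerivAt (fun p => (G p * e p - 2 * F p * f p + E p * g p) /
      (2 * (E p * G p - F p ^ 2))) ((1 / 2 : ℝ) • (e' + g')) x := by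
  have hnum : HasFDerivAt (fun p => G p * e p - 2 * F p * f p + E p * g p) (e' + g') x := by
    have := ((hG.fun_mul he).fun_sub ((hF.const_mul 2).fun_mul hf)).fun_add (hE.fun_mul hg)
    simpa [E1, F0, G1] using this
  have hden : HasFDerivAt (fun p => 2 * (E p * G p - F p ^ 2)) (0 : ℝ × ℝ →L[ℝ] ℝ) x := by
    have := ((hE.fun_mul hG).fun_sub (hF.fun_mul hF)).const_mul 2
    simpa [pow_two] using this
  have hinv := (hasDerivAt_inv (x := 2 * (E x * G x - F x ^ 2))
    (by simp [E1, F0, G1])).comp_hasFDerivAt x hden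
  have hq := hnum.fun_mul hinv
  have h0' : G x * e x - 2 * F x * f x + E x * g x = 0 := by
    rw [E1, F0, G1]; linarith
  simp only [div_eq_mul_inv]
  refine hq.congr_fderiv ?_
  rw [h0']
  simp [E1, F0, G1]

end Calculus

/-! ### The tangent and normal frames of the Monge chart -/

section Frame

variable {h₁ h₂ : ℝ × ℝ → ℝ}

lemma αu_eq (h₁s : ContDiff ℝ (⊤ : ℕ∞) h₁) (h₂s : ContDiff ℝ (⊤ : ℕ∞) h₂) :
    αu h₁ h₂ = fun p => mk4 1 0 (pdu h₁ p) (pdu h₂ p) := by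
  funext p
  refine (fderiv_mk4 differentiableAt_fst differentiableAt_snd
    (h₁s.differentiable (by simp) p) (h₂s.differentiable (by simp) p) _).trans ?_
  simp [pdu, fderiv_fst, fderiv_snd]

lemma αv_eq (h₁s : ContDiff ℝ (⊤ : ℕ∞) h₁) (h₂s : ContDiff ℝ (⊤ : ℕ∞) h₂) :
    αv h₁ h₂ = fun p => mk4 0 1 (pdv h₁ p) (pdv h₂ p) := by
  funext p
  refine (fderiv_mk4 differentiableAt_fst differentiableAt_snd
    (h₁s.differentiable (by simp) p) (h₂s.differentiable (by simp) p) _).trans ?_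
  simp [pdv, fderiv_fst, fderiv_snd]

lemma fderiv_mk4_const {k l : ℝ} {f g : ℝ × ℝ → ℝ} (hf : ContDiff ℝ (⊤ : ℕ∞) f)
    (hg : ContDiff ℝ (⊤ : ℕ∞) g) (p w : ℝ × ℝ) :
    fderiv ℝ (fun p => mk4 k l (f p) (g p)) p w =
      mk4 0 0 (fderiv ℝ f p w) (fderiv ℝ g p w) := by
  refine (fderiv_mk4 (differentiableAt_const k) (differentiableAt_const l)
    (hf.differentiable (by simp) p) (hg.differentiable (by simp) p) _).trans ?_
  simp

lemma αuu_eq (h₁s : ContDiff ℝ (⊤ : ℕ∞) h₁) (h₂s : ContDiff ℝ (⊤ : ℕ∞) h₂) :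
    αuu h₁ h₂ = fun p => mk4 0 0 (pdu (pdu h₁) p) (pdu (pdu h₂) p) := by
  funext p
  rw [αuu, αu_eq h₁s h₂s]
  exact fderiv_mk4_const (contDiff_pdu h₁s) (contDiff_pdu h₂s) _ _

lemma αuv_eq (h₁s : ContDiff ℝ (⊤ : ℕ∞) h₁) (h₂s : ContDiff ℝ (⊤ : ℕ∞) h₂) :
    αuv h₁ h₂ = fun p => mk4 0 0 (pdv (pdu h₁) p) (pdv (pdu h₂) p) := by
  funext p
  rw [αuv, αu_eq h₁s h₂s]
  exact fderiv_mk4_const (contDiff_pdu h₁s) (contDiff_pdu h₂s) _ _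

lemma αvv_eq (h₁s : ContDiff ℝ (⊤ : ℕ∞) h₁) (h₂s : ContDiff ℝ (⊤ : ℕ∞) h₂) :
    αvv h₁ h₂ = fun p => mk4 0 0 (pdv (pdv h₁) p) (pdv (pdv h₂) p) := by
  funext p
  rw [αvv, αv_eq h₁s h₂s]
  exact fderiv_mk4_const (contDiff_pdv h₁s) (contDiff_pdv h₂s) _ _

/-- Near a critical point of `h₁` the normal `N₁` is `e₃` up to tangential components, to first
order. -/
lemma hasFDerivAt_N1 {x : ℝ × ℝ} (h₁s : ContDiff ℝ (⊤ : ℕ∞) h₁)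
    (pu : pdu h₁ x = 0) (pv : pdv h₁ x = 0) :
    ∃ n₁ n₂ m₁ m₂ : ℝ × ℝ → ℝ, (N1 h₁ = fun p => mk4 (n₁ p) (n₂ p) (m₁ p) (m₂ p)) ∧
      m₁ x = 1 ∧ m₂ x = 0 ∧
      HasFDerivAt m₁ (0 : ℝ × ℝ →L[ℝ] ℝ) x ∧ HasFDerivAt m₂ (0 : ℝ × ℝ →L[ℝ] ℝ) x := by
  have dU := (contDiff_pdu h₁s).differentiable (by simp) x
  have dV := (contDiff_pdv h₁s).differentiable (by simp) x
  set S : ℝ × ℝ → ℝ := fun p => pdu h₁ p * pdu h₁ p + pdv h₁ p * pdv h₁ p + 1 with hS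
  have dS : HasFDerivAt S (0 : ℝ × ℝ →L[ℝ] ℝ) x := by
    exact (((hasFDerivAt_mul_zero dU dU pu pu).fun_add
      (hasFDerivAt_mul_zero dV dV pv pv)).add_const 1).congr_fderiv (by simp)
  have S1 : S x = 1 := by simp [hS, pu, pv]
  have hB : ∀ p, B1 h₁ p = mk4 (-pdu h₁ p) (-pdv h₁ p) 1 0 := fun _ => rfl
  have hn : ∀ p, ‖B1 h₁ p‖ = √(S p) := by
    intro p; rw [hB, norm_mk4]; congr 1; simp only [hS]; ring
  refine ⟨fun p => (√(S p))⁻¹ * -pdu h₁ p, fun p => (√(S p))⁻¹ * -pdv h₁ p,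
    fun p => (√(S p))⁻¹, fun _ => 0, ?_, by simp [S1], rfl, hasFDerivAt_inv_sqrt dS S1,
    hasFDerivAt_const _ _⟩
  funext p
  rw [N1, hn, hB, smul_mk4]
  simp

/-- Near a common critical point of `h₁` and `h₂` the normal `N₂` is `e₄` up to tangential
components, to first order. -/
lemma hasFDerivAt_N2 {x : ℝ × ℝ} (h₁s : ContDiff ℝ (⊤ : ℕ∞) h₁) (h₂s : ContDiff ℝ (⊤ : ℕ∞) h₂)
    (pu₁ : pdu h₁ x = 0) (pv₁ : pdv h₁ x = 0) (pu₂ : pdu h₂ x = 0) (pv₂ : pdv h₂ x = 0) :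
    ∃ n₁ n₂ m₁ m₂ : ℝ × ℝ → ℝ, (N2 h₁ h₂ = fun p => mk4 (n₁ p) (n₂ p) (m₁ p) (m₂ p)) ∧
      m₁ x = 0 ∧ m₂ x = 1 ∧
      HasFDerivAt m₁ (0 : ℝ × ℝ →L[ℝ] ℝ) x ∧ HasFDerivAt m₂ (0 : ℝ × ℝ →L[ℝ] ℝ) x := by
  have dU₁ := (contDiff_pdu h₁s).differentiable (by simp) x
  have dV₁ := (contDiff_pdv h₁s).differentiable (by simp) x
  have dU₂ := (contDiff_pdu h₂s).differentiable (by simp) x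
  have dV₂ := (contDiff_pdv h₂s).differentiable (by simp) x
  -- the components of the unnormalized normal `B₂`
  let b₁ : ℝ × ℝ → ℝ := fun p => pdu h₁ p * pdv h₁ p * pdv h₂ p
    - pdu h₂ p * (1 + pdv h₁ p * pdv h₁ p)
  let b₂ : ℝ × ℝ → ℝ := fun p => pdu h₁ p * pdv h₁ p * pdu h₂ p
    - pdv h₂ p * (1 + pdu h₁ p * pdu h₁ p)
  let b₃ : ℝ × ℝ → ℝ := fun p => -(pdu h₁ p * pdu h₂ p + pdv h₁ p * pdv h₂ p)
  let b₄ : ℝ × ℝ → ℝ := fun p => 1 + pdu h₁ p * pdu h₁ p + pdv h₁ p * pdv h₁ p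
  have v₁ : b₁ x = 0 := by simp [b₁, pu₁, pu₂]
  have v₂ : b₂ x = 0 := by simp [b₂, pu₁, pv₂]
  have v₃ : b₃ x = 0 := by simp [b₃, pu₁, pv₁]
  have v₄ : b₄ x = 1 := by simp [b₄, pu₁, pv₁]
  have d₁ : DifferentiableAt ℝ b₁ x := by fun_prop
  have d₂ : DifferentiableAt ℝ b₂ x := by fun_prop
  have d₃ : HasFDerivAt b₃ (0 : ℝ × ℝ →L[ℝ] ℝ) x := by
    exact (((hasFDerivAt_mul_zero dU₁ dU₂ pu₁ pu₂).fun_add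
      (hasFDerivAt_mul_zero dV₁ dV₂ pv₁ pv₂)).fun_neg).congr_fderiv (by simp)
  have d₄ : HasFDerivAt b₄ (0 : ℝ × ℝ →L[ℝ] ℝ) x := by
    simpa using ((hasFDerivAt_mul_zero dU₁ dU₁ pu₁ pu₁).const_add 1).fun_add
      (hasFDerivAt_mul_zero dV₁ dV₁ pv₁ pv₁)
  let S : ℝ × ℝ → ℝ := fun p => b₁ p * b₁ p + b₂ p * b₂ p + b₃ p * b₃ p + b₄ p * b₄ p
  have dS : HasFDerivAt S (0 : ℝ × ℝ →L[ℝ] ℝ) x := by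
    simpa using (((hasFDerivAt_mul_zero d₁ d₁ v₁ v₁).fun_add
      (hasFDerivAt_mul_zero d₂ d₂ v₂ v₂)).fun_add (hasFDerivAt_mul_stat d₃ d₃)).fun_add
      (hasFDerivAt_mul_stat d₄ d₄)
  have S1 : S x = 1 := by simp [S, v₁, v₂, v₃, v₄]
  have dn := hasFDerivAt_inv_sqrt dS S1
  have hB : ∀ p, B2 h₁ h₂ p = mk4 (b₁ p) (b₂ p) (b₃ p) (b₄ p) := by
    intro p
    rw [B2, αu_eq h₁s h₂s, αv_eq h₁s h₂s]
    exact wedge_mk4 _ _ _ _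
  refine ⟨fun p => (√(S p))⁻¹ * b₁ p, fun p => (√(S p))⁻¹ * b₂ p,
    fun p => (√(S p))⁻¹ * b₃ p, fun p => (√(S p))⁻¹ * b₄ p, ?_, by simp [v₃], by simp [S1, v₄],
    hasFDerivAt_mul_stat dn d₃, hasFDerivAt_mul_stat dn d₄⟩
  funext p
  rw [N2, hB, norm_mk4, smul_mk4]

/-! ### The coefficient of `dv²` at a normal singularity -/

/-- The differential of `A = F g_H - f_H G` at a normal singularity:
`dA = -(s₁ d(Δh₁) + s₂ d(Δh₂)) / 2`. -/
lemma hasFDerivAt_A {x : ℝ × ℝ} (h₁s : ContDiff ℝ (⊤ : ℕ∞) h₁) (h₂s : ContDiff ℝ (⊤ : ℕ∞) h₂)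
    (pu₁ : pdu h₁ x = 0) (pv₁ : pdv h₁ x = 0) (pu₂ : pdu h₂ x = 0) (pv₂ : pdv h₂ x = 0)
    (ns₁ : pdu (pdu h₁) x + pdv (pdv h₁) x = 0) (ns₂ : pdu (pdu h₂) x + pdv (pdv h₂) x = 0) :
    Fc h₁ h₂ x * gH h₁ h₂ x - fH h₁ h₂ x * Gc h₁ h₂ x = 0 ∧
    HasFDerivAt (fun p => Fc h₁ h₂ p * gH h₁ h₂ p - fH h₁ h₂ p * Gc h₁ h₂ p)
      (-(pdv (pdu h₁) x • (1 / 2 : ℝ) •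
          (fderiv ℝ (pdu (pdu h₁)) x + fderiv ℝ (pdv (pdv h₁)) x) +
        pdv (pdu h₂) x • (1 / 2 : ℝ) •
          (fderiv ℝ (pdu (pdu h₂)) x + fderiv ℝ (pdv (pdv h₂)) x))) x := by
  have cu₁ := contDiff_pdu h₁s
  have cv₁ := contDiff_pdv h₁s
  have cu₂ := contDiff_pdu h₂s
  have cv₂ := contDiff_pdv h₂s
  have dU₁ := cu₁.differentiable (by simp) x
  have dV₁ := cv₁.differentiable (by simp) x
  have dU₂ := cu₂.differentiable (by simp) x
  have dV₂ := cv₂.differentiable (by simp) x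
  have duu₁ := (contDiff_pdu cu₁).differentiable (by simp) x
  have duu₂ := (contDiff_pdu cu₂).differentiable (by simp) x
  have duv₁ := (contDiff_pdv cu₁).differentiable (by simp) x
  have duv₂ := (contDiff_pdv cu₂).differentiable (by simp) x
  have dvv₁ := (contDiff_pdv cv₁).differentiable (by simp) x
  have dvv₂ := (contDiff_pdv cv₂).differentiable (by simp) x
  have hE : Ec h₁ h₂ = fun p => 1 + pdu h₁ p * pdu h₁ p + pdu h₂ p * pdu h₂ p := by
    funext p; rw [Ec, αu_eq h₁s h₂s, inner_mk4]; ring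
  have hF : Fc h₁ h₂ = fun p => pdu h₁ p * pdv h₁ p + pdu h₂ p * pdv h₂ p := by
    funext p; rw [Fc, αu_eq h₁s h₂s, αv_eq h₁s h₂s, inner_mk4]; ring
  have hG : Gc h₁ h₂ = fun p => 1 + pdv h₁ p * pdv h₁ p + pdv h₂ p * pdv h₂ p := by
    funext p; rw [Gc, αv_eq h₁s h₂s, inner_mk4]; ring
  have E1 : Ec h₁ h₂ x = 1 := by simp [hE, pu₁, pu₂]
  have F0 : Fc h₁ h₂ x = 0 := by simp [hF, pu₁, pu₂]
  have G1 : Gc h₁ h₂ x = 1 := by simp [hG, pv₁, pv₂]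
  have dE : HasFDerivAt (Ec h₁ h₂) (0 : ℝ × ℝ →L[ℝ] ℝ) x := by
    rw [hE]
    simpa using ((hasFDerivAt_mul_zero dU₁ dU₁ pu₁ pu₁).const_add 1).fun_add
      (hasFDerivAt_mul_zero dU₂ dU₂ pu₂ pu₂)
  have dF : HasFDerivAt (Fc h₁ h₂) (0 : ℝ × ℝ →L[ℝ] ℝ) x := by
    rw [hF]
    simpa using (hasFDerivAt_mul_zero dU₁ dV₁ pu₁ pv₁).fun_add
      (hasFDerivAt_mul_zero dU₂ dV₂ pu₂ pv₂)
  have dG : HasFDerivAt (Gc h₁ h₂) (0 : ℝ × ℝ →L[ℝ] ℝ) x := by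
    rw [hG]
    simpa using ((hasFDerivAt_mul_zero dV₁ dV₁ pv₁ pv₁).const_add 1).fun_add
      (hasFDerivAt_mul_zero dV₂ dV₂ pv₂ pv₂)
  obtain ⟨n₁, n₂, m₁, m₂, hN1, hm₁, hm₂, dm₁, dm₂⟩ := hasFDerivAt_N1 h₁s pu₁ pv₁
  obtain ⟨k₁, k₂, l₁, l₂, hN2, hl₁, hl₂, dl₁, dl₂⟩ :=
    hasFDerivAt_N2 h₁s h₂s pu₁ pv₁ pu₂ pv₂
  have he1 : e1 h₁ h₂ = fun p => pdu (pdu h₁) p * m₁ p + pdu (pdu h₂) p * m₂ p := by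
    funext p; rw [e1, αuu_eq h₁s h₂s, hN1, inner_mk4]; ring
  have hf1 : f1 h₁ h₂ = fun p => pdv (pdu h₁) p * m₁ p + pdv (pdu h₂) p * m₂ p := by
    funext p; rw [f1, αuv_eq h₁s h₂s, hN1, inner_mk4]; ring
  have hg1 : g1 h₁ h₂ = fun p => pdv (pdv h₁) p * m₁ p + pdv (pdv h₂) p * m₂ p := by
    funext p; rw [g1, αvv_eq h₁s h₂s, hN1, inner_mk4]; ring
  have he2 : e2 h₁ h₂ = fun p => pdu (pdu h₁) p * l₁ p + pdu (pdu h₂) p * l₂ p := by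
    funext p; rw [e2, αuu_eq h₁s h₂s, hN2, inner_mk4]; ring
  have hf2 : f2 h₁ h₂ = fun p => pdv (pdu h₁) p * l₁ p + pdv (pdu h₂) p * l₂ p := by
    funext p; rw [f2, αuv_eq h₁s h₂s, hN2, inner_mk4]; ring
  have hg2 : g2 h₁ h₂ = fun p => pdv (pdv h₁) p * l₁ p + pdv (pdv h₂) p * l₂ p := by
    funext p; rw [g2, αvv_eq h₁s h₂s, hN2, inner_mk4]; ring
  have de1 : HasFDerivAt (e1 h₁ h₂) (fderiv ℝ (pdu (pdu h₁)) x) x := by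
    rw [he1]; simpa [hm₁, hm₂] using hasFDerivAt_inner_frame duu₁ duu₂ dm₁ dm₂
  have df1 : HasFDerivAt (f1 h₁ h₂) (fderiv ℝ (pdv (pdu h₁)) x) x := by
    rw [hf1]; simpa [hm₁, hm₂] using hasFDerivAt_inner_frame duv₁ duv₂ dm₁ dm₂
  have dg1 : HasFDerivAt (g1 h₁ h₂) (fderiv ℝ (pdv (pdv h₁)) x) x := by
    rw [hg1]; simpa [hm₁, hm₂] using hasFDerivAt_inner_frame dvv₁ dvv₂ dm₁ dm₂
  have de2 : HasFDerivAt (e2 h₁ h₂) (fderiv ℝ (pdu (pdu h₂)) x) x := by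
    rw [he2]; simpa [hl₁, hl₂] using hasFDerivAt_inner_frame duu₁ duu₂ dl₁ dl₂
  have df2 : HasFDerivAt (f2 h₁ h₂) (fderiv ℝ (pdv (pdu h₂)) x) x := by
    rw [hf2]; simpa [hl₁, hl₂] using hasFDerivAt_inner_frame duv₁ duv₂ dl₁ dl₂
  have dg2 : HasFDerivAt (g2 h₁ h₂) (fderiv ℝ (pdv (pdv h₂)) x) x := by
    rw [hg2]; simpa [hl₁, hl₂] using hasFDerivAt_inner_frame dvv₁ dvv₂ dl₁ dl₂
  have z₁ : e1 h₁ h₂ x + g1 h₁ h₂ x = 0 := by simp [he1, hg1, hm₁, hm₂, ns₁]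
  have z₂ : e2 h₁ h₂ x + g2 h₁ h₂ x = 0 := by simp [he2, hg2, hl₁, hl₂, ns₂]
  have dH1 : HasFDerivAt (Hc1 h₁ h₂) _ x :=
    hasFDerivAt_meanCurv dE dF dG de1 df1 dg1 E1 F0 G1 z₁
  have dH2 : HasFDerivAt (Hc2 h₁ h₂) _ x :=
    hasFDerivAt_meanCurv dE dF dG de2 df2 dg2 E1 F0 G1 z₂
  have H10 : Hc1 h₁ h₂ x = 0 := by simp [Hc1, E1, F0, G1, z₁]
  have H20 : Hc2 h₁ h₂ x = 0 := by simp [Hc2, E1, F0, G1, z₂]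
  have hfH : fH h₁ h₂ = fun p => Hc1 h₁ h₂ p * f1 h₁ h₂ p + Hc2 h₁ h₂ p * f2 h₁ h₂ p := by
    funext p; simp only [fH, Hvec, f1, f2, inner_add_right, real_inner_smul_right]
  have hgH : gH h₁ h₂ = fun p => Hc1 h₁ h₂ p * g1 h₁ h₂ p + Hc2 h₁ h₂ p * g2 h₁ h₂ p := by
    funext p; simp only [gH, Hvec, g1, g2, inner_add_right, real_inner_smul_right]
  have fH0 : fH h₁ h₂ x = 0 := by simp [hfH, H10, H20]
  have gH0 : gH h₁ h₂ x = 0 := by simp [hgH, H10, H20]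
  have f1x : f1 h₁ h₂ x = pdv (pdu h₁) x := by simp [hf1, hm₁, hm₂]
  have f2x : f2 h₁ h₂ x = pdv (pdu h₂) x := by simp [hf2, hl₁, hl₂]
  have dfH := (dH1.fun_mul df1).fun_add (dH2.fun_mul df2)
  have dgH := (dH1.fun_mul dg1).fun_add (dH2.fun_mul dg2)
  rw [← hfH] at dfH
  rw [← hgH] at dgH
  refine ⟨by rw [F0, fH0]; ring, ?_⟩
  refine ((dF.fun_mul dgH).fun_sub (dfH.fun_mul dG)).congr_fderiv ?_
  simp only [F0, fH0, gH0, G1, H10, H20, f1x, f2x, zero_smul, one_smul, smul_zero, zero_add,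
    zero_sub]

end Frame

/-- at a normal singularity, the coefficient `A = F g_H − f_H G` of `dv²`
in the differential equation of principal mean curvature lines vanishes at the origin and
has the stated first derivatives. -/
theorem stmt6
    (h₁ h₂ : ℝ × ℝ → ℝ)
    (h₁smooth : ContDiff ℝ (⊤ : ℕ∞) h₁) (h₂smooth : ContDiff ℝ (⊤ : ℕ∞) h₂)
    (h₁zero : h₁ (0, 0) = 0) (h₂zero : h₂ (0, 0) = 0)
    (h₁grad : fderiv ℝ h₁ (0, 0) = 0) (h₂grad : fderiv ℝ h₂ (0, 0) = 0)
    (hns₁ : rr h₁ + tt h₁ = 0) (hns₂ : rr h₂ + tt h₂ = 0) :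
    (fun p => Fc h₁ h₂ p * gH h₁ h₂ p - fH h₁ h₂ p * Gc h₁ h₂ p) (0, 0) = 0 ∧
    pdu (fun p => Fc h₁ h₂ p * gH h₁ h₂ p - fH h₁ h₂ p * Gc h₁ h₂ p) (0, 0) =
      -(ss h₁ * (aa h₁ + bb h₁) + ss h₂ * (aa h₂ + bb h₂)) / 2 ∧
    pdv (fun p => Fc h₁ h₂ p * gH h₁ h₂ p - fH h₁ h₂ p * Gc h₁ h₂ p) (0, 0) =
      -(ss h₁ * (cc h₁ + dd h₁) + ss h₂ * (cc h₂ + dd h₂)) / 2 := by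
  have pu₁ : pdu h₁ (0, 0) = 0 := by simp [pdu, h₁grad]
  have pv₁ : pdv h₁ (0, 0) = 0 := by simp [pdv, h₁grad]
  have pu₂ : pdu h₂ (0, 0) = 0 := by simp [pdu, h₂grad]
  have pv₂ : pdv h₂ (0, 0) = 0 := by simp [pdv, h₂grad]
  obtain ⟨hA, dA⟩ := hasFDerivAt_A h₁smooth h₂smooth pu₁ pv₁ pu₂ pv₂ hns₁ hns₂
  -- `∂u ∂v² h = ∂v² ∂u h`, the form in which `bb` is defined
  have sym : ∀ h : ℝ × ℝ → ℝ, ContDiff ℝ (⊤ : ℕ∞) h →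
      fderiv ℝ (pdv (pdv h)) (0, 0) (1, 0) = bb h := by
    intro h hs
    change pdu (pdv (pdv h)) (0, 0) = pdv (pdv (pdu h)) (0, 0)
    rw [pdu_pdv_comm (contDiff_pdv hs), pdu_pdv_comm hs]
  refine ⟨hA, ?_, ?_⟩
  · rw [pdu, dA.fderiv]
    simp only [neg_apply, add_apply, smul_apply, smul_eq_mul, sym _ h₁smooth, sym _ h₂smooth]
    simp only [ss, aa, pdu]
    ring
  · rw [pdv, dA.fderiv]
    simp only [neg_apply, add_apply, smul_apply, smul_eq_mul]
    simp only [ss, cc, dd, pdv]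
    ring
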